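/- For every ε > 0 there exist α > 0 and N such that for all n ≥ N and all positive integers k ≤ α · log n / log log n, there exists a tight-cycle-free 3-partite 3-uniform hypergraph on at most 3n vertices with at least (1 − ε) k n² hyperedges. Consequently, f_3(n) = Ω(n² log n / log log n). -/

import Mathlib

/-- The edge ("window") `{v i, v (i+1), …, v (i+r-1)}` of a tight cycle. -/
def tightWindow {V : Type*} [DecidableEq V] (r : ℕ) {ℓ : ℕ} (v : ZMod ℓ → V)
    (i : ZMod ℓ) : Finset V :=
  Finset.image (fun j : Fin r => v (i + (j : ℕ))) Finset.univ

/-- `E` contains an `r`-uniform tight cycle of length `ℓ`: distinct vertices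
`v 0, …, v (ℓ-1)` all of whose `r`-windows (indices mod `ℓ`) are edges of `E`. -/
def IsTightCycleIn {V : Type*} [DecidableEq V] (r ℓ : ℕ) (E : Set (Finset V)) : Prop :=
  ∃ v : ZMod ℓ → V, Function.Injective v ∧ ∀ i : ZMod ℓ, tightWindow r v i ∈ E

/-- `E` contains an `r`-uniform tight cycle of some length `ℓ > r`. -/
def HasTightCycle {V : Type*} [DecidableEq V] (r : ℕ) (E : Set (Finset V)) : Prop :=
  ∃ ℓ : ℕ, r < ℓ ∧ IsTightCycleIn r ℓ E

/-- `E` is tight-cycle-free. -/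
def TightCycleFree {V : Type*} [DecidableEq V] (r : ℕ) (E : Set (Finset V)) : Prop :=
  ¬ HasTightCycle r E

/-- `f_r(n)`: the maximum number of edges of an `r`-uniform tight-cycle-free
hypergraph on `n` vertices. -/
noncomputable def tightCycleTuran (r n : ℕ) : ℕ :=
  sSup {m | ∃ E : Finset (Finset (Fin n)), (∀ e ∈ E, e.card = r) ∧
    TightCycleFree r (E : Set (Finset (Fin n))) ∧ E.card = m}

/-!
In a 3-partite 3-uniform hypergraph a tight cycle visits the three classes cyclically. If its
vertices in order are `x 0, y 0, z 0, x 1, y 1, z 1, …`, then `y t z t` is in the link of both `x t`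
and `x (t + 1)`, while `y (t + 1) z t` is in the link of `x (t + 1)`. Hence `y 0, z 0, y 1, z 1, …`
is a cycle in the union of the links.

Take edge-disjoint bipartite graphs on `n + n` vertices, each of girth greater than `2 * k`, and
make each of them the link of `k` vertices of the first class. A shared link edge forces `x t` and
`x (t + 1)` to have the same link graph, so all of the cycle lives over one graph. That graph would
contain a cycle of length at most `2 * k`, because it has only `k` apices.

As long as a positive proportion of the `n ^ 2` pairs is unused, one can greedily extract from them
another such graph with `k * n` edges: with all degrees at most `D ≈ 2 * k / δ`, each vertex has at
most `D ^ (2 * k + 1)` vertices of the other class within distance `2 * k + 1`, which is less than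
`δ * n` when `k ≤ (log n / log log n) / 8`. The process therefore uses up almost all pairs, and each
pair contributes `k` hyperedges.
-/

open Finset Filter Real

section TightCycle

variable {V W : Type*} [DecidableEq V] [DecidableEq W] {r ℓ : ℕ}

lemma tightWindow_comp (f : V → W) (v : ZMod ℓ → V) (i : ZMod ℓ) :
    tightWindow r (f ∘ v) i = (tightWindow r v i).image f := by
  simp only [tightWindow, image_image]
  rfl

lemma tightWindow_add_right (v : ZMod ℓ → V) (s i : ZMod ℓ) :
    tightWindow r (fun t ↦ v (t + s)) i = tightWindow r v (i + s) := by
  simp only [tightWindow, add_right_comm]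

lemma tightWindow_sub_left (v : ZMod ℓ → V) (s i : ZMod ℓ) :
    tightWindow (r + 1) (fun t ↦ v (s - t)) i = tightWindow (r + 1) v (s - i - r) := by
  have hrev (j : Fin (r + 1)) :
      s - (i + (j : ℕ)) = s - i - r + ((Fin.revPerm j : Fin (r + 1)) : ℕ) := by
    rw [Fin.revPerm_apply, Fin.val_rev, Nat.succ_sub_succ, Nat.cast_sub (Fin.is_le j)]
    ring
  calc tightWindow (r + 1) (fun t ↦ v (s - t)) i
      = univ.image ((fun j : Fin (r + 1) ↦ v (s - i - r + (j : ℕ))) ∘ Fin.revPerm) := by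
        simp only [tightWindow, hrev, Function.comp_def]
    _ = tightWindow (r + 1) v (s - i - r) := by
        rw [← image_image, image_univ_equiv, tightWindow]

lemma mem_tightWindow_self (hr : 0 < r) (v : ZMod ℓ → V) (i : ZMod ℓ) : v i ∈ tightWindow r v i :=
  mem_image.2 ⟨⟨0, hr⟩, mem_univ _, by simp⟩

lemma tightWindow_three (v : ZMod ℓ → V) (i : ZMod ℓ) :
    tightWindow 3 v i = {v i, v (i + 1), v (i + 2)} := by
  ext a
  simp [tightWindow, Fin.exists_fin_succ, eq_comm, one_add_one_eq_two]

lemma TightCycleFree.image {f : V → W} (hf : Function.Injective f) (hr : 0 < r)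
    {E : Set (Finset V)} (hE : TightCycleFree r E) :
    TightCycleFree r (Finset.image f '' E) := by
  rintro ⟨ℓ, hℓ, v, hv, hvE⟩
  have hrange (i : ZMod ℓ) : ∃ u, f u = v i := by
    obtain ⟨e, -, he⟩ := hvE i
    obtain ⟨u, -, hu⟩ := mem_image.1 (he ▸ mem_tightWindow_self hr v i)
    exact ⟨u, hu⟩
  choose u hu using hrange
  obtain rfl : f ∘ u = v := funext hu
  refine hE ⟨ℓ, hℓ, u, hv.of_comp, fun i ↦ ?_⟩
  obtain ⟨e, heE, he⟩ := hvE i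
  rw [tightWindow_comp] at he
  exact image_injective hf he ▸ heE

lemma card_le_tightCycleTuran [Fintype V] {n : ℕ} (hr : 0 < r) (hn : Fintype.card V ≤ n)
    {E : Finset (Finset V)} (hcard : ∀ e ∈ E, #e = r)
    (hE : TightCycleFree r (E : Set (Finset V))) : #E ≤ tightCycleTuran r n := by
  obtain ⟨f⟩ : Nonempty (V ↪ Fin n) := Function.Embedding.nonempty_of_card_le (by simpa using hn)
  refine le_csSup ⟨#(univ : Finset (Finset (Fin n))), ?_⟩
    ⟨E.image (Finset.image f), ?_, ?_, card_image_of_injective _ (image_injective f.injective)⟩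
  · rintro _ ⟨F, _, _, rfl⟩
    exact card_le_card (subset_univ F)
  · simpa [card_image_of_injective _ f.injective] using hcard
  · simpa using hE.image f.injective hr

end TightCycle

section Tripartite

variable {V : Type*} [DecidableEq V] {col : V → ZMod 3}

/-- `E` is 3-partite and 3-uniform, with the three vertex classes encoded as the fibres of a
colouring by `ZMod 3`, so that the cyclic order of the classes becomes addition. -/
def IsTripartite (col : V → ZMod 3) (E : Set (Finset V)) : Prop :=
  ∀ e ∈ E, ∃ x y z, col x = 0 ∧ col y = 1 ∧ col z = 2 ∧ e = {x, y, z}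

lemma IsTripartite.color_step {E : Set (Finset V)} (hE : IsTripartite col E) {u v w : V}
    (he : {u, v, w} ∈ E) :
    (col v - col u = 1 ∨ col v - col u = -1) ∧ col w - col v = col v - col u := by
  have hperm : ∀ a b c : ZMod 3, ({a, b, c} : Finset (ZMod 3)) = {0, 1, 2} →
      (b - a = 1 ∨ b - a = -1) ∧ c - b = b - a := by decide
  obtain ⟨x, y, z, hx, hy, hz, hxyz⟩ := hE _ he
  apply hperm
  simpa only [image_insert, image_singleton, hx, hy, hz] using congrArg (Finset.image col) hxyz

lemma IsTripartite.exists_color_eq_add_mul {E : Set (Finset V)} (hE : IsTripartite col E) {ℓ : ℕ}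
    (hℓ : 0 < ℓ) {v : ZMod ℓ → V} (hvE : ∀ i, tightWindow 3 v i ∈ E) :
    ∃ hdvd : 3 ∣ ℓ, ∃ d : ZMod 3, (d = 1 ∨ d = -1) ∧
      ∀ i, col (v i) = col (v 0) + ZMod.castHom hdvd (ZMod 3) i * d := by
  have : NeZero ℓ := ⟨hℓ.ne'⟩
  simp only [tightWindow_three] at hvE
  let step (i : ZMod ℓ) : ZMod 3 := col (v (i + 1)) - col (v i)
  have hstep : Function.Periodic step 1 := fun i ↦ by
    simpa only [step, add_assoc, one_add_one_eq_two] using (hE.color_step (hvE i)).2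
  have hconst (i : ZMod ℓ) : step i = step 0 := by
    obtain ⟨j, rfl⟩ := ZMod.natCast_zmod_surjective i
    simpa only [mul_one] using hstep.nat_mul_eq j
  have hd : step 0 = 1 ∨ step 0 = -1 := (hE.color_step (hvE 0)).1.imp
    (by simp only [step, imp_self]) (by simp only [step, imp_self])
  have hnat (j : ℕ) : col (v (j : ZMod ℓ)) = col (v 0) + j * step 0 := by
    induction j with
    | zero => simp
    | succ j ih =>
      have := hconst j
      push_cast
      linear_combination this + ih
  have hdvd : 3 ∣ ℓ := by
    have hzero : (ℓ : ZMod 3) * step 0 = 0 := by simpa using hnat ℓ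
    rw [← ZMod.natCast_eq_zero_iff]
    rcases hd with h | h <;> simpa [h] using hzero
  refine ⟨hdvd, step 0, hd, fun i ↦ ?_⟩
  obtain ⟨j, rfl⟩ := ZMod.natCast_zmod_surjective i
  simpa using hnat j

-- Along a tight cycle the colour changes by a constant `±1`, so rotating and possibly reversing the
-- cycle makes the colour of the `i`-th vertex equal to `i` modulo 3.
lemma IsTripartite.exists_aligned_tightCycle {E : Set (Finset V)} (hE : IsTripartite col E)
    (hcycle : HasTightCycle 3 E) :
    ∃ p, 2 ≤ p ∧ ∃ w : ZMod (3 * p) → V, Function.Injective w ∧ (∀ i, tightWindow 3 w i ∈ E) ∧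
      ∀ i, col (w i) = ZMod.castHom (dvd_mul_right 3 p) (ZMod 3) i := by
  obtain ⟨ℓ, hℓ, v, hv, hvE⟩ := hcycle
  obtain ⟨⟨p, rfl⟩, d, hd, hcol⟩ := hE.exists_color_eq_add_mul (by omega) hvE
  obtain ⟨c, hc⟩ := ZMod.castHom_surjective (dvd_mul_right 3 p) (col (v 0))
  refine ⟨p, by omega, ?_⟩
  rcases hd with rfl | rfl
  · refine ⟨fun i ↦ v (i + -c), hv.comp (add_left_injective _), fun i ↦ ?_, fun i ↦ ?_⟩
    · rw [tightWindow_add_right]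
      exact hvE _
    · rw [hcol, ← hc, map_add, map_neg]
      ring
  · refine ⟨fun i ↦ v (c - i), hv.comp sub_right_injective, fun i ↦ ?_, fun i ↦ ?_⟩
    · rw [tightWindow_sub_left]
      exact hvE _
    · rw [hcol, ← hc, map_sub]
      ring

end Tripartite

section TripleHypergraph

lemma exists_injective_zmod_mul (m p : ℕ) (hm : m ≠ 0) :
    ∃ φ : ZMod p →+ ZMod (m * p), Function.Injective φ ∧ φ 1 = m ∧
      ∀ t, ZMod.castHom (dvd_mul_right m p) (ZMod m) (φ t) = 0 := by
  have hp : (p : ZMod (m * p)) * m = 0 := by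
    rw [← Nat.cast_mul, mul_comm, ZMod.natCast_self]
  let f : {f : ℤ →+ ZMod (m * p) // f p = 0} :=
    ⟨zmultiplesHom _ (m : ZMod (m * p)), by simpa using hp⟩
  refine ⟨ZMod.lift p f, (ZMod.lift_injective p).2 fun a ha ↦ ?_, ?_, fun t ↦ ?_⟩
  · have hdvd : (m : ℤ) * p ∣ m * a := by
      have hcast : ((m * a : ℤ) : ZMod (m * p)) = 0 := by simpa [f, mul_comm] using ha
      simpa using (ZMod.intCast_zmod_eq_zero_iff_dvd _ _).1 hcast
    exact (ZMod.intCast_zmod_eq_zero_iff_dvd _ _).2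
      (Int.dvd_of_mul_dvd_mul_left (by exact_mod_cast hm) hdvd)
  · simpa [f] using ZMod.lift_coe p f 1
  · obtain ⟨s, rfl⟩ := ZMod.intCast_surjective t
    simp [f]

variable {X A B : Type*}

/-- The vertex class, in the encoding of `IsTripartite`, of a vertex of `X ⊕ A ⊕ B`. -/
def side : X ⊕ A ⊕ B → ZMod 3
  | .inl _ => 0
  | .inr (.inl _) => 1
  | .inr (.inr _) => 2

lemma side_eq_zero_iff {v : X ⊕ A ⊕ B} : side v = 0 ↔ ∃ x, v = .inl x := by
  rcases v with x | a | b
  · simp [side]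
  · simp [side]
  · simp [side, (by decide : (2 : ZMod 3) ≠ 0)]

lemma side_eq_one_iff {v : X ⊕ A ⊕ B} : side v = 1 ↔ ∃ a, v = .inr (.inl a) := by
  rcases v with x | a | b
  · simp [side]
  · simp [side]
  · simp [side, (by decide : (2 : ZMod 3) ≠ 1)]

lemma side_eq_two_iff {v : X ⊕ A ⊕ B} : side v = 2 ↔ ∃ b, v = .inr (.inr b) := by
  rcases v with x | a | b
  · simp [side, (by decide : (0 : ZMod 3) ≠ 2)]
  · simp [side, (by decide : (1 : ZMod 3) ≠ 2)]
  · simp [side]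

variable [DecidableEq X] [DecidableEq A] [DecidableEq B]

/-- The hyperedge on the vertex set `X ⊕ A ⊕ B` given by one vertex of each class. -/
def tripleEdge (q : X × A × B) : Finset (X ⊕ A ⊕ B) :=
  {.inl q.1, .inr (.inl q.2.1), .inr (.inr q.2.2)}

/-- The 3-partite 3-uniform hypergraph on `X ⊕ A ⊕ B` whose hyperedges are the triples in `T`. -/
def tripleHypergraph (T : Finset (X × A × B)) : Finset (Finset (X ⊕ A ⊕ B)) :=
  T.image tripleEdge

lemma mem_of_mem_tripleHypergraph {T : Finset (X × A × B)} {e : Finset (X ⊕ A ⊕ B)} {x : X} {a : A}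
    {b : B} (he : e ∈ tripleHypergraph T) (hx : .inl x ∈ e) (ha : .inr (.inl a) ∈ e)
    (hb : .inr (.inr b) ∈ e) : (x, a, b) ∈ T := by
  obtain ⟨⟨x', a', b'⟩, hT, rfl⟩ := mem_image.1 he
  obtain rfl : x = x' := by simpa [tripleEdge] using hx
  obtain rfl : a = a' := by simpa [tripleEdge] using ha
  obtain rfl : b = b' := by simpa [tripleEdge] using hb
  exact hT

lemma tripleEdge_injective : Function.Injective (tripleEdge : X × A × B → _) := fun q q' h ↦ by
  have hmem : tripleEdge q ∈ tripleHypergraph {q'} := by simp [tripleHypergraph, h]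
  simpa using mem_of_mem_tripleHypergraph (x := q.1) (a := q.2.1) (b := q.2.2) hmem
    (by simp [tripleEdge]) (by simp [tripleEdge]) (by simp [tripleEdge])

lemma card_tripleHypergraph (T : Finset (X × A × B)) : #(tripleHypergraph T) = #T :=
  card_image_of_injective _ tripleEdge_injective

lemma isTripartite_tripleHypergraph (T : Finset (X × A × B)) :
    IsTripartite side (tripleHypergraph T : Set (Finset (X ⊕ A ⊕ B))) := fun e he ↦ by
  obtain ⟨⟨x, a, b⟩, -, rfl⟩ := mem_image.1 (mem_coe.1 he)
  exact ⟨.inl x, .inr (.inl a), .inr (.inr b), rfl, rfl, rfl, rfl⟩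

lemma exists_cyclic_triples {T : Finset (X × A × B)}
    (hcycle : HasTightCycle 3 (tripleHypergraph T : Set (Finset (X ⊕ A ⊕ B)))) :
    ∃ p, 2 ≤ p ∧ ∃ (x : ZMod p → X) (y : ZMod p → A) (z : ZMod p → B),
      Function.Injective x ∧ Function.Injective y ∧ Function.Injective z ∧
      ∀ t, (x t, y t, z t) ∈ T ∧ (x (t + 1), y t, z t) ∈ T ∧ (x (t + 1), y (t + 1), z t) ∈ T := by
  obtain ⟨p, hp, w, hw, hwE, hcol⟩ :=
    (isTripartite_tripleHypergraph T).exists_aligned_tightCycle hcycle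
  have : NeZero p := ⟨by omega⟩
  obtain ⟨φ, hφ, hφ1, hφ0⟩ := exists_injective_zmod_mul 3 p three_ne_zero
  have hφ_add (t : ZMod p) : φ (t + 1) = φ t + 3 := by simp [hφ1]
  have hcol_add (t : ZMod p) (j : ℕ) : side (w (φ t + j)) = j := by
    rw [hcol, map_add, hφ0, zero_add, map_natCast]
  have hcol0 (t : ZMod p) : side (w (φ t)) = 0 := by simpa using hcol_add t 0
  have hcol1 (t : ZMod p) : side (w (φ t + 1)) = 1 := by simpa using hcol_add t 1
  have hcol2 (t : ZMod p) : side (w (φ t + 2)) = 2 := by simpa using hcol_add t 2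
  choose x hx using fun t ↦ side_eq_zero_iff.1 (hcol0 t)
  choose y hy using fun t ↦ side_eq_one_iff.1 (hcol1 t)
  choose z hz using fun t ↦ side_eq_two_iff.1 (hcol2 t)
  simp only [tightWindow_three, mem_coe] at hwE
  refine ⟨p, hp, x, y, z, fun s t h ↦ ?_, fun s t h ↦ ?_, fun s t h ↦ ?_, fun t ↦ ⟨?_, ?_, ?_⟩⟩
  · exact hφ (hw (by rw [hx, hx, h]))
  · exact hφ (add_right_cancel (hw (by rw [hy, hy, h])))
  · exact hφ (add_right_cancel (hw (by rw [hz, hz, h])))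
  · have hedge := hwE (φ t)
    rw [hx, hy, hz] at hedge
    exact mem_of_mem_tripleHypergraph hedge (by simp) (by simp) (by simp)
  · have hedge := hwE (φ t + 1)
    rw [show φ t + 1 + 1 = φ t + 2 by ring, show φ t + 1 + 2 = φ (t + 1) by rw [hφ_add]; ring,
      hx, hy, hz] at hedge
    exact mem_of_mem_tripleHypergraph hedge (by simp) (by simp) (by simp)
  · have hedge := hwE (φ t + 2)
    rw [show φ t + 2 + 1 = φ (t + 1) by rw [hφ_add]; ring,
      show φ t + 2 + 2 = φ (t + 1) + 1 by rw [hφ_add]; ring, hx, hy, hz] at hedge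
    exact mem_of_mem_tripleHypergraph hedge (by simp) (by simp) (by simp)

end TripleHypergraph

section Girth

variable {A B : Type*} {G : Finset (A × B)} {ℓ : ℕ}

/-- `y 0, z 0, y 1, z 1, …` is a cycle of length `2 * ℓ` in the bipartite graph with edge set
`G ⊆ A × B`. For `ℓ = 1` this degenerates to a single edge, for `ℓ = 0` to a two-way infinite
path. -/
structure IsBipartiteCycle (G : Finset (A × B)) (y : ZMod ℓ → A) (z : ZMod ℓ → B) : Prop where
  left_injective : Function.Injective y
  right_injective : Function.Injective z
  mem : ∀ t, (y t, z t) ∈ G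
  mem_succ : ∀ t, (y (t + 1), z t) ∈ G

/-- The bipartite graph `G` has girth greater than `2 * k`. -/
def HalfGirthGT (G : Finset (A × B)) (k : ℕ) : Prop :=
  ∀ ℓ, 2 ≤ ℓ → ℓ ≤ k → ∀ (y : ZMod ℓ → A) (z : ZMod ℓ → B), ¬ IsBipartiteCycle G y z

lemma halfGirthGT_empty (k : ℕ) : HalfGirthGT (∅ : Finset (A × B)) k :=
  fun _ _ _ _ _ h ↦ notMem_empty _ (h.mem 0)

lemma IsBipartiteCycle.reverse {y : ZMod ℓ → A} {z : ZMod ℓ → B} (h : IsBipartiteCycle G y z) :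
    IsBipartiteCycle G (fun t ↦ y (1 - t)) (fun t ↦ z (-t)) where
  left_injective := h.left_injective.comp sub_right_injective
  right_injective := h.right_injective.comp neg_injective
  mem t := by simpa only [neg_add_eq_sub] using h.mem_succ (-t)
  mem_succ t := by simpa using h.mem (-t)

variable [DecidableEq A] [DecidableEq B]

/-- The vertices in `A` reachable from `b` by a walk of length `2 * j + 1` in the bipartite
graph `G`. -/
def oddBall (G : Finset (A × B)) (b : B) : ℕ → Finset A
  | 0 => {p ∈ G | p.2 = b}.image Prod.fst
  | j + 1 => (oddBall G b j).biUnion fun a ↦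
      {p ∈ G | p.1 = a}.biUnion fun p ↦ {q ∈ G | q.2 = p.2}.image Prod.fst

lemma mem_oddBall_zero {a : A} {b : B} : a ∈ oddBall G b 0 ↔ (a, b) ∈ G := by
  simp [oddBall]

lemma mem_oddBall_succ {a : A} {b : B} {j : ℕ} :
    a ∈ oddBall G b (j + 1) ↔ ∃ a' ∈ oddBall G b j, ∃ b', (a', b') ∈ G ∧ (a, b') ∈ G := by
  simp [oddBall]

lemma exists_mem_of_mem_oddBall {a : A} {b : B} {j : ℕ} (h : a ∈ oddBall G b j) :
    ∃ b', (a, b') ∈ G := by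
  cases j with
  | zero => exact ⟨b, mem_oddBall_zero.1 h⟩
  | succ j =>
    obtain ⟨-, -, b', -, hab'⟩ := mem_oddBall_succ.1 h
    exact ⟨b', hab'⟩

lemma oddBall_mono (b : B) : Monotone (oddBall G b) :=
  monotone_nat_of_le_succ fun _ a ha ↦
    have ⟨b', hab'⟩ := exists_mem_of_mem_oddBall ha
    mem_oddBall_succ.2 ⟨a, ha, b', hab', hab'⟩

lemma IsBipartiteCycle.mem_oddBall {y : ZMod ℓ → A} {z : ZMod ℓ → B} {t : ZMod ℓ}
    (h : IsBipartiteCycle (insert (y t, z t) G) y z) (hℓ : 2 ≤ ℓ) :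
    y t ∈ oddBall G (z t) (ℓ - 1) := by
  have : Fact (1 < ℓ) := ⟨hℓ⟩
  have hmem {s : ZMod ℓ} (hs : s ≠ t) : (y s, z s) ∈ G :=
    (mem_insert.1 (h.mem s)).resolve_left fun heq ↦ hs (h.left_injective (Prod.mk.inj heq).1)
  have hmem_succ (s : ZMod ℓ) : (y (s + 1), z s) ∈ G :=
    (mem_insert.1 (h.mem_succ s)).resolve_left fun heq ↦ by
      obtain rfl := h.right_injective (Prod.mk.inj heq).2
      simpa using h.left_injective (Prod.mk.inj heq).1
  have hwalk (j : ℕ) (hj : j < ℓ) : y (t + (j + 1 : ℕ)) ∈ oddBall G (z t) j := by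
    induction j with
    | zero => simpa [mem_oddBall_zero] using hmem_succ t
    | succ j ih =>
      have hne : t + (j + 1 : ℕ) ≠ t := fun heq ↦ Nat.not_dvd_of_pos_of_lt j.succ_pos hj
        ((ZMod.natCast_eq_zero_iff _ _).1 (add_eq_left.1 heq))
      exact mem_oddBall_succ.2 ⟨_, ih (by omega), _, hmem hne,
        by simpa [add_assoc, one_add_one_eq_two] using hmem_succ (t + (j + 1 : ℕ))⟩
  simpa [Nat.sub_add_cancel (by omega : 1 ≤ ℓ)] using hwalk (ℓ - 1) (by omega)

-- A short cycle through the new edge would leave a short walk between its ends in `G`.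
lemma HalfGirthGT.insert {k : ℕ} {a : A} {b : B} (hG : HalfGirthGT G k)
    (hab : a ∉ oddBall G b k) : HalfGirthGT (insert (a, b) G) k := by
  intro ℓ hℓ hℓk y z h
  have havoid {y : ZMod ℓ → A} {z : ZMod ℓ → B} (h : IsBipartiteCycle (Insert.insert (a, b) G) y z)
      (t : ZMod ℓ) : (y t, z t) ≠ (a, b) := by
    intro heq
    obtain ⟨rfl, rfl⟩ := Prod.mk.inj heq
    exact hab (oddBall_mono (z t) (by omega) (h.mem_oddBall hℓ))
  refine hG ℓ hℓ hℓk y z ⟨h.left_injective, h.right_injective, fun t ↦ ?_, fun t ↦ ?_⟩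
  · exact (mem_insert.1 (h.mem t)).resolve_left (havoid h t)
  · exact (mem_insert.1 (h.mem_succ t)).resolve_left
      (by simpa [add_comm t 1] using havoid h.reverse (-t))

/-- Every vertex of the bipartite graph `G` has degree at most `D`. -/
structure MaxDegreeLE (G : Finset (A × B)) (D : ℕ) : Prop where
  left : ∀ a, #{p ∈ G | p.1 = a} ≤ D
  right : ∀ b, #{p ∈ G | p.2 = b} ≤ D

lemma card_filter_insert_le {α β : Type*} [DecidableEq α] [DecidableEq β] {s : Finset α}
    {f : α → β} {D : ℕ} {x : α} (hs : ∀ b, #{y ∈ s | f y = b} ≤ D)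
    (hx : #{y ∈ s | f y = f x} < D) (b : β) : #{y ∈ Insert.insert x s | f y = b} ≤ D := by
  rw [filter_insert]
  split_ifs with h
  · subst h
    exact (card_insert_le _ _).trans hx
  · exact hs b

lemma MaxDegreeLE.insert {D : ℕ} {a : A} {b : B} (hG : MaxDegreeLE G D)
    (ha : #{p ∈ G | p.1 = a} < D) (hb : #{p ∈ G | p.2 = b} < D) :
    MaxDegreeLE (insert (a, b) G) D :=
  ⟨card_filter_insert_le hG.left ha, card_filter_insert_le hG.right hb⟩

lemma MaxDegreeLE.card_oddBall_le {D : ℕ} (hG : MaxDegreeLE G D) (b : B) (j : ℕ) :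
    #(oddBall G b j) ≤ D ^ (2 * j + 1) := by
  have hnbr (b : B) : #({p ∈ G | p.2 = b}.image Prod.fst) ≤ D := card_image_le.trans (hG.right b)
  induction j with
  | zero => simpa [oddBall] using hnbr b
  | succ j ih =>
    calc #(oddBall G b (j + 1))
        ≤ #(oddBall G b j) * (D * D) := card_biUnion_le_card_mul _ _ _ fun a _ ↦
          (card_biUnion_le_card_mul _ _ D fun p _ ↦ hnbr p.2).trans
            (Nat.mul_le_mul_right _ (hG.left a))
      _ ≤ D ^ (2 * j + 1) * (D * D) := Nat.mul_le_mul_right _ ih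
      _ = D ^ (2 * (j + 1) + 1) := by ring

lemma card_filter_le_card_fiber_mul_le {α β : Type*} [Fintype β] [DecidableEq β] (s : Finset α)
    (f : α → β) (D : ℕ) : #{b | D ≤ #{x ∈ s | f x = b}} * D ≤ #s := by
  calc #{b | D ≤ #{x ∈ s | f x = b}} * D
      ≤ ∑ b with D ≤ #{x ∈ s | f x = b}, #{x ∈ s | f x = b} :=
        card_nsmul_le_sum _ _ _ fun b hb ↦ (mem_filter.1 hb).2
    _ ≤ ∑ b, #{x ∈ s | f x = b} := sum_le_sum_of_subset (filter_subset _ _)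
    _ = #s := (card_eq_sum_card_fiberwise fun _ _ ↦ mem_coe.2 (mem_univ _)).symm

variable [Fintype A] [Fintype B]

lemma MaxDegreeLE.exists_extendable_edge {D k : ℕ} (hG : MaxDegreeLE G D) {R : Finset (A × B)}
    (hR : #G * (Fintype.card A + Fintype.card B) + Fintype.card B * D ^ (2 * k + 2) < D * #R) :
    ∃ a b, (a, b) ∈ R ∧ a ∉ oddBall G b k ∧ #{p ∈ G | p.1 = a} < D ∧ #{p ∈ G | p.2 = b} < D := by
  by_contra! hblocked
  let fullA : Finset A := {a | D ≤ #{p ∈ G | p.1 = a}}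
  let fullB : Finset B := {b | D ≤ #{p ∈ G | p.2 = b}}
  let near : Finset (A × B) := univ.biUnion fun b ↦ (oddBall G b k).image (·, b)
  have hcover : R ⊆ fullA ×ˢ univ ∪ univ ×ˢ fullB ∪ near := by
    rintro ⟨a, b⟩ hab
    have := hblocked a b hab
    simp only [fullA, fullB, near, mem_union, mem_product, mem_filter, mem_univ, true_and,
      and_true, mem_biUnion, mem_image, Prod.mk.injEq]
    grind
  have hnear : #near ≤ Fintype.card B * D ^ (2 * k + 1) :=
    card_biUnion_le_card_mul _ _ _ fun b _ ↦ card_image_le.trans (hG.card_oddBall_le b k)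
  have hfullA : #fullA * D ≤ #G := card_filter_le_card_fiber_mul_le G Prod.fst D
  have hfullB : #fullB * D ≤ #G := card_filter_le_card_fiber_mul_le G Prod.snd D
  refine hR.not_ge ?_
  calc D * #R ≤ D * (#fullA * Fintype.card B + Fintype.card A * #fullB + #near) := by
        gcongr
        refine (card_le_card hcover).trans ((card_union_le _ _).trans ?_)
        gcongr
        exact (card_union_le _ _).trans (by simp)
    _ = #fullA * D * Fintype.card B + #fullB * D * Fintype.card A + D * #near := by ring
    _ ≤ #G * Fintype.card B + #G * Fintype.card A +
          D * (Fintype.card B * D ^ (2 * k + 1)) := by gcongr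
    _ = #G * (Fintype.card A + Fintype.card B) + Fintype.card B * D ^ (2 * k + 2) := by ring

lemma exists_subset_card_eq_halfGirthGT {D k M : ℕ} {R : Finset (A × B)}
    (hR : M * (Fintype.card A + Fintype.card B) + Fintype.card B * D ^ (2 * k + 2) < D * #R) :
    ∃ G ⊆ R, #G = M ∧ MaxDegreeLE G D ∧ HalfGirthGT G k := by
  induction M with
  | zero => exact ⟨∅, empty_subset R, card_empty, ⟨by simp, by simp⟩, halfGirthGT_empty k⟩
  | succ M ih =>
    have hRM : M * (Fintype.card A + Fintype.card B) + Fintype.card B * D ^ (2 * k + 2) < D * #R :=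
      lt_of_le_of_lt (by gcongr; omega) hR
    obtain ⟨G, hGR, rfl, hdeg, hgirth⟩ := ih hRM
    obtain ⟨a, b, habR, hfar, ha, hb⟩ := hdeg.exists_extendable_edge hRM
    have habG : (a, b) ∉ G := fun h ↦
      hfar (oddBall_mono b (Nat.zero_le k) (mem_oddBall_zero.2 h))
    exact ⟨insert (a, b) G, insert_subset habR hGR, card_insert_of_notMem habG,
      hdeg.insert ha hb, hgirth.insert hfar⟩

end Girth

section Packing

variable {α : Type*}

lemma exists_pairwiseDisjoint_subsets {P : Finset α → Prop} {M : ℕ} {s : ℝ} (hM : 0 < M)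
    (h : ∀ R : Finset α, s ≤ #R → ∃ G ⊆ R, #G = M ∧ P G) (U : Finset α) :
    ∃ 𝓖 : Finset (Finset α), (∀ G ∈ 𝓖, G ⊆ U ∧ #G = M ∧ P G) ∧
      (𝓖 : Set (Finset α)).PairwiseDisjoint id ∧ (#U : ℝ) < #𝓖 * M + s := by
  classical
  induction U using Finset.strongInduction with
  | H U ih =>
    rcases lt_or_ge (#U : ℝ) s with hU | hU
    · exact ⟨∅, by simp, by simp, by simpa using hU⟩
    obtain ⟨G, hGU, hGM, hPG⟩ := h U hU
    have hG : G.Nonempty := card_pos.1 (hGM ▸ hM)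
    obtain ⟨𝓖, h𝓖, hdisj, hcard⟩ := ih (U \ G) (sdiff_ssubset hGU hG)
    have hGdisj {H : Finset α} (hH : H ∈ 𝓖) : Disjoint G H :=
      disjoint_sdiff.mono_right (h𝓖 H hH).1
    have hG𝓖 : G ∉ 𝓖 := fun hmem ↦ hG.ne_empty (disjoint_self.1 (hGdisj hmem))
    refine ⟨insert G 𝓖, ?_, ?_, ?_⟩
    · exact forall_mem_insert _ _ _ |>.2 ⟨⟨hGU, hGM, hPG⟩, fun H hH ↦
        ⟨(h𝓖 H hH).1.trans sdiff_subset, (h𝓖 H hH).2⟩⟩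
    · rw [coe_insert]
      exact hdisj.insert fun H hH _ ↦ hGdisj hH
    · have hsplit : (#(U \ G) : ℝ) + M = #U := by
        exact_mod_cast hGM ▸ card_sdiff_add_card_eq_card hGU
      rw [card_insert_of_notMem hG𝓖]
      push_cast
      linarith

lemma card_mul_le_of_pairwiseDisjoint {𝓖 : Finset (Finset α)} {U : Finset α} {M : ℕ}
    (h𝓖 : ∀ G ∈ 𝓖, G ⊆ U ∧ #G = M) (hdisj : (𝓖 : Set (Finset α)).PairwiseDisjoint id) :
    #𝓖 * M ≤ #U := by
  classical
  calc #𝓖 * M = #(𝓖.biUnion id) :=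
        ((card_biUnion hdisj).trans (sum_const_nat fun G hG ↦ (h𝓖 G hG).2)).symm
    _ ≤ #U := card_le_card (biUnion_subset.2 fun G hG ↦ (h𝓖 G hG).1)

end Packing

section Apex

variable {ι κ A B : Type*} [Fintype ι] [Fintype κ] [Fintype A] [Fintype B]
  [DecidableEq A] [DecidableEq B]

/-- The triples obtained by joining every edge of the bipartite graph `𝓖 c` to each of the apex
vertices `(c, j)`, `j : κ`, of colour `c`. -/
def apexTriples (κ : Type*) [Fintype κ] (𝓖 : ι → Finset (A × B)) : Finset ((ι × κ) × A × B) :=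
  {q | q.2 ∈ 𝓖 q.1.1}

lemma mem_apexTriples {𝓖 : ι → Finset (A × B)} {x : ι × κ} {p : A × B} :
    (x, p) ∈ apexTriples κ 𝓖 ↔ p ∈ 𝓖 x.1 := by
  simp [apexTriples]

lemma card_apexTriples {M : ℕ} {𝓖 : ι → Finset (A × B)} (h𝓖 : ∀ c, #(𝓖 c) = M) :
    #(apexTriples κ 𝓖) = Fintype.card ι * Fintype.card κ * M := by
  have hfiber (x : ι × κ) : ∑ p : A × B, (if p ∈ 𝓖 x.1 then 1 else 0) = M := by
    rw [← card_filter, filter_univ_mem, h𝓖]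
  rw [apexTriples, card_filter, Fintype.sum_prod_type]
  simp only [hfiber, sum_const, card_univ, Fintype.card_prod, smul_eq_mul]

variable [DecidableEq ι] [DecidableEq κ]

-- Consecutive apices on a tight cycle share a graph edge. As the graphs are disjoint, all apices
-- then have the same colour `c`, so the cycle projects to a cycle in the single graph `𝓖 c`, which
-- is short because there are few apices of colour `c`.
lemma tightCycleFree_apexTriples {𝓖 : ι → Finset (A × B)}
    (hgirth : ∀ c, HalfGirthGT (𝓖 c) (Fintype.card κ))
    (hdisj : Pairwise fun c d ↦ Disjoint (𝓖 c) (𝓖 d)) :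
    TightCycleFree 3 (tripleHypergraph (apexTriples κ 𝓖) : Set (Finset ((ι × κ) ⊕ A ⊕ B))) := by
  intro hcycle
  obtain ⟨p, hp, x, y, z, hx, hy, hz, hT⟩ := exists_cyclic_triples hcycle
  simp only [mem_apexTriples] at hT
  have : NeZero p := ⟨by omega⟩
  have hperiodic : Function.Periodic (fun t ↦ (x t).1) 1 := fun t ↦ by
    by_contra hne
    exact disjoint_left.1 (hdisj hne) (hT t).2.1 (hT t).1
  have hcolor (t : ZMod p) : (x t).1 = (x 0).1 := by
    obtain ⟨j, rfl⟩ := ZMod.natCast_zmod_surjective t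
    simpa only [mul_one] using hperiodic.nat_mul_eq j
  have hle : p ≤ Fintype.card κ := by
    have hinj : Function.Injective fun t ↦ (x t).2 := fun s t hst ↦
      hx (Prod.ext ((hcolor s).trans (hcolor t).symm) hst)
    simpa [ZMod.card] using Fintype.card_le_of_injective _ hinj
  exact hgirth (x 0).1 p hp hle y z ⟨hy, hz, fun t ↦ hcolor t ▸ (hT t).1,
    fun t ↦ hcolor (t + 1) ▸ (hT t).2.2⟩

end Apex

section AdmitsTripartiteTightCycleFree

/-- There is a tight-cycle-free 3-partite 3-uniform hypergraph on exactly `m` vertices with at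
least `s` hyperedges. -/
def AdmitsTripartiteTightCycleFree (m : ℕ) (s : ℝ) : Prop :=
  ∃ X Y Z : Finset (Fin m), Disjoint X Y ∧ Disjoint X Z ∧ Disjoint Y Z ∧ X ∪ Y ∪ Z = univ ∧
    ∃ E : Finset (Finset (Fin m)), (∀ e ∈ E, ∃ x ∈ X, ∃ y ∈ Y, ∃ z ∈ Z, e = {x, y, z}) ∧
      TightCycleFree 3 (E : Set (Finset (Fin m))) ∧ s ≤ #E

lemma AdmitsTripartiteTightCycleFree.mono {m : ℕ} {s t : ℝ}
    (h : AdmitsTripartiteTightCycleFree m t) (hst : s ≤ t) :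
    AdmitsTripartiteTightCycleFree m s := by
  obtain ⟨X, Y, Z, hXY, hXZ, hYZ, hcover, E, hE, hfree, ht⟩ := h
  exact ⟨X, Y, Z, hXY, hXZ, hYZ, hcover, E, hE, hfree, hst.trans ht⟩

lemma AdmitsTripartiteTightCycleFree.le_tightCycleTuran {m n : ℕ} {s : ℝ}
    (h : AdmitsTripartiteTightCycleFree m s) (hmn : m ≤ n) : s ≤ tightCycleTuran 3 n := by
  obtain ⟨X, Y, Z, hXY, hXZ, hYZ, -, E, hE, hfree, hs⟩ := h
  have hcard (e : Finset (Fin m)) (he : e ∈ E) : #e = 3 := by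
    obtain ⟨x, hx, y, hy, z, hz, rfl⟩ := hE e he
    exact card_eq_three.2 ⟨x, y, z, ne_of_mem_of_not_mem hx (disjoint_right.1 hXY hy),
      ne_of_mem_of_not_mem hx (disjoint_right.1 hXZ hz),
      ne_of_mem_of_not_mem hy (disjoint_right.1 hYZ hz), rfl⟩
  exact hs.trans (mod_cast card_le_tightCycleTuran three_pos (by simpa using hmn) hcard hfree)

lemma IsTripartite.admitsTripartiteTightCycleFree {V : Type*} [Fintype V] [DecidableEq V]
    {col : V → ZMod 3} {E : Finset (Finset V)} (hE : IsTripartite col (E : Set (Finset V)))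
    (hfree : TightCycleFree 3 (E : Set (Finset V))) :
    AdmitsTripartiteTightCycleFree (Fintype.card V) #E := by
  let f := Fintype.equivFin V
  let part (i : ZMod 3) : Finset (Fin (Fintype.card V)) := {a | col (f.symm a) = i}
  have hdisj {i j : ZMod 3} (hij : i ≠ j) : Disjoint (part i) (part j) :=
    disjoint_filter.2 fun _ _ hi hj ↦ hij (hi.symm.trans hj)
  have hcover : ∀ i : ZMod 3, i = 0 ∨ i = 1 ∨ i = 2 := by decide
  refine ⟨part 0, part 1, part 2, hdisj (by decide), hdisj (by decide), hdisj (by decide), ?_,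
    E.image (Finset.image f), forall_mem_image.2 fun e he ↦ ?_, ?_, ?_⟩
  · ext a
    simpa [part] using hcover _
  · obtain ⟨x, y, z, hx, hy, hz, rfl⟩ := hE e he
    exact ⟨f x, by simpa [part], f y, by simpa [part], f z, by simpa [part],
      by simp only [image_insert, image_singleton]⟩
  · simpa using hfree.image f.injective three_pos
  · rw [card_image_of_injective _ (image_injective f.injective)]

end AdmitsTripartiteTightCycleFree

section Construction

lemma exists_subset_card_eq_mul_halfGirthGT {n k : ℕ} {δ : ℝ} (hδ : 0 < δ) (hδ1 : δ ≤ 1)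
    (hk : 0 < k) (hlarge : (3 * k / δ) ^ (2 * k + 1) < δ * n) {R : Finset (Fin n × Fin n)}
    (hR : 2 * δ * n ^ 2 ≤ #R) : ∃ G ⊆ R, #G = k * n ∧ HalfGirthGT G k := by
  have hk1 : (1 : ℝ) ≤ k := mod_cast hk
  have hkδ : 1 ≤ k / δ := (one_le_div hδ).2 (hδ1.trans hk1)
  let D := ⌈2 * k / δ⌉₊
  have hD_ge : 2 * k ≤ δ * D := by
    rw [← div_le_iff₀' hδ]
    exact Nat.le_ceil _
  have hD_le : (D : ℝ) ≤ 3 * k / δ := by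
    have hceil : (D : ℝ) < 2 * k / δ + 1 := Nat.ceil_lt_add_one (by positivity)
    rw [mul_div_assoc] at hceil ⊢
    linarith
  have hD_pos : (0 : ℝ) < D := pos_of_mul_pos_right (by linarith) hδ.le
  have hn : (0 : ℝ) < n := by
    have : 0 < δ * n := lt_of_le_of_lt (by positivity) hlarge
    exact pos_of_mul_pos_right this hδ.le
  have hpow : (D : ℝ) ^ (2 * k + 1) < δ * n := (pow_le_pow_left₀ hD_pos.le hD_le _).trans_lt hlarge
  have hroom : ((k * n * (n + n) + n * D ^ (2 * k + 2) : ℕ) : ℝ) < (D * #R : ℕ) := by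
    push_cast
    calc (k * n * (n + n) + n * D ^ (2 * k + 2) : ℝ)
        = (2 * k) * n ^ 2 + n * D * D ^ (2 * k + 1) := by ring
      _ < (δ * D) * n ^ 2 + n * D * (δ * n) :=
        add_lt_add_of_le_of_lt (by gcongr) (by gcongr)
      _ = D * (2 * δ * n ^ 2) := by ring
      _ ≤ D * #R := by gcongr
  obtain ⟨G, hGR, hcard, -, hgirth⟩ := exists_subset_card_eq_halfGirthGT (D := D) (k := k)
    (M := k * n) (R := R) (by simpa using Nat.cast_lt.1 hroom)
  exact ⟨G, hGR, hcard, hgirth⟩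

lemma exists_admitsTripartiteTightCycleFree {n k : ℕ} {δ : ℝ} (hδ : 0 < δ) (hδ1 : δ ≤ 1)
    (hk : 0 < k) (hlarge : (3 * k / δ) ^ (2 * k + 1) < δ * n) :
    ∃ m ≤ 3 * n, AdmitsTripartiteTightCycleFree m ((1 - 2 * δ) * k * n ^ 2) := by
  have hn : 0 < n := by
    have : 0 < δ * n := lt_of_le_of_lt (by positivity) hlarge
    exact_mod_cast pos_of_mul_pos_right this hδ.le
  obtain ⟨𝓖, h𝓖, hdisj, hcover⟩ := exists_pairwiseDisjoint_subsets (Nat.mul_pos hk hn)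
    (fun _ ↦ exists_subset_card_eq_mul_halfGirthGT hδ hδ1 hk hlarge)
    (univ : Finset (Fin n × Fin n))
  have hapices : #𝓖 * k ≤ n := by
    have := card_mul_le_of_pairwiseDisjoint (fun G hG ↦ ⟨(h𝓖 G hG).1, (h𝓖 G hG).2.1⟩) hdisj
    refine Nat.le_of_mul_le_mul_right ?_ hn
    simpa [mul_assoc] using this
  let T := apexTriples (Fin k) fun G : 𝓖 ↦ G.1
  have hfree := tightCycleFree_apexTriples (κ := Fin k) (𝓖 := fun G : 𝓖 ↦ G.1)
    (fun G ↦ by simpa using (h𝓖 G G.2).2.2)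
    fun G H hGH ↦ hdisj G.2 H.2 (Subtype.coe_injective.ne hGH)
  have hcard : #T = #𝓖 * k * (k * n) := by
    simpa using card_apexTriples (κ := Fin k) (𝓖 := fun G : 𝓖 ↦ G.1) fun G ↦ (h𝓖 G G.2).2.1
  have hadmits := (isTripartite_tripleHypergraph T).admitsTripartiteTightCycleFree hfree
  refine ⟨_, ?_, hadmits.mono ?_⟩
  · simp only [Fintype.card_sum, Fintype.card_prod, Fintype.card_coe, Fintype.card_fin]
    omega
  · rw [card_tripleHypergraph, hcard]
    have hcover' : (n : ℝ) ^ 2 < #𝓖 * (k * n) + 2 * δ * n ^ 2 := by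
      simpa [← pow_two] using hcover
    push_cast
    calc ((1 - 2 * δ) * k * n ^ 2 : ℝ) = k * (n ^ 2 - 2 * δ * n ^ 2) := by ring
      _ ≤ k * ((#𝓖 : ℝ) * (k * n)) := by gcongr; linarith
      _ = #𝓖 * k * (k * n) := by ring

end Construction

section Asymptotics

lemma eventually_three_mul_div_pow_lt {δ : ℝ} (hδ : 0 < δ) :
    ∀ᶠ x : ℝ in atTop, ∀ k : ℕ, 0 < k → k ≤ 1 / 8 * log x / log (log x) →
      (3 * k / δ) ^ (2 * k + 1) < δ * x := by
  have hloglog := tendsto_log_atTop.comp tendsto_log_atTop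
  filter_upwards [hloglog.eventually_ge_atTop 1, tendsto_log_atTop.eventually_ge_atTop (3 / δ),
    tendsto_log_atTop.eventually_gt_atTop (-4 * log δ), eventually_gt_atTop 0]
    with x hloglog_ge hlog_ge hlog_gt hx k hk hkx
  rw [Function.comp_apply] at hloglog_ge
  have hk1 : (1 : ℝ) ≤ k := mod_cast hk
  have hk_mul : k * log (log x) ≤ 1 / 8 * log x := (le_div_iff₀ (by linarith)).1 hkx
  have hlog_pos : 0 < log x := lt_of_lt_of_le (by positivity) hlog_ge
  have hbase : log (3 * k / δ) ≤ 2 * log (log x) := by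
    have hkL : (k : ℝ) ≤ log x := by nlinarith
    have hsq : 3 * k / δ ≤ log x ^ 2 := by
      calc 3 * k / δ = 3 / δ * k := by ring
        _ ≤ log x * log x := by gcongr
        _ = log x ^ 2 := by ring
    simpa using log_le_log (by positivity) hsq
  rw [← log_lt_log_iff (by positivity) (by positivity), log_pow, log_mul hδ.ne' hx.ne']
  push_cast
  calc (2 * k + 1) * log (3 * k / δ) ≤ (2 * k + 1) * (2 * log (log x)) := by gcongr
    _ ≤ (3 * k) * (2 * log (log x)) := by gcongr; linarith
    _ = 6 * (k * log (log x)) := by ring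
    _ < log δ + log x := by linarith

lemma log_div_log_log_le_two_mul {x y : ℝ} (hy : 1 < log y) (hy0 : 0 < y) (hyx : y ≤ x)
    (hxy : x ≤ y ^ 2) : log x / log (log x) ≤ 2 * (log y / log (log y)) := by
  have hlog : log y ≤ log x := log_le_log hy0 hyx
  have hlog_sq : log x ≤ 2 * log y := by simpa using log_le_log (hy0.trans_le hyx) hxy
  have hloglog : log (log y) ≤ log (log x) := log_le_log (by linarith) hlog
  have hpos : 0 < log (log y) := log_pos hy
  rw [← mul_div_assoc]
  gcongr

lemma tendsto_log_div_log_log_atTop :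
    Tendsto (fun x : ℝ ↦ log x / log (log x)) atTop atTop := by
  have hexp : Tendsto (fun x : ℝ ↦ exp x / x) atTop atTop := by
    simpa using tendsto_exp_div_pow_atTop 1
  refine (hexp.comp (tendsto_log_atTop.comp tendsto_log_atTop)).congr' ?_
  filter_upwards [tendsto_log_atTop.eventually_gt_atTop 0] with x hx
  simp [exp_log hx]

end Asymptotics

section LowerBound

lemma eventually_exists_admitsTripartiteTightCycleFree {ε : ℝ} (hε : 0 < ε) :
    ∀ᶠ n : ℕ in atTop, ∀ k : ℕ, 0 < k → k ≤ 1 / 8 * log n / log (log n) →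
      ∃ m ≤ 3 * n, AdmitsTripartiteTightCycleFree m ((1 - ε) * k * n ^ 2) := by
  let δ := min (ε / 2) 1
  have hδ : 0 < δ := lt_min (half_pos hε) one_pos
  filter_upwards [tendsto_natCast_atTop_atTop.eventually (eventually_three_mul_div_pow_lt hδ)]
    with n hn k hk hkn
  obtain ⟨m, hm, hadmits⟩ :=
    exists_admitsTripartiteTightCycleFree hδ (min_le_right _ _) hk (hn k hk hkn)
  have hδε : 2 * δ ≤ ε := by linarith [min_le_left (ε / 2) 1]
  exact ⟨m, hm, hadmits.mono (by gcongr)⟩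

lemma eventually_le_tightCycleTuran_three :
    ∀ᶠ n : ℕ in atTop, 1 / 1024 * n ^ 2 * log n / log (log n) ≤ tightCycleTuran 3 n := by
  have hdiv : Tendsto (fun n : ℕ ↦ n / 3) atTop atTop := Nat.tendsto_div_const_atTop three_ne_zero
  have hcast : Tendsto (fun n : ℕ ↦ ((n / 3 : ℕ) : ℝ)) atTop atTop :=
    tendsto_natCast_atTop_atTop.comp hdiv
  filter_upwards [
    hdiv.eventually (eventually_exists_admitsTripartiteTightCycleFree one_half_pos),
    hcast.eventually (tendsto_log_div_log_log_atTop.eventually_ge_atTop 16),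
    hcast.eventually (tendsto_log_atTop.eventually_gt_atTop 1), eventually_ge_atTop 16]
    with n hadmits hq16 hlog hn
  obtain ⟨hdiv_le, hle_div⟩ : 3 * (n / 3) ≤ n ∧ n ≤ 4 * (n / 3) := by omega
  generalize n / 3 = n' at hadmits hq16 hlog hdiv_le hle_div
  set q := log n' / log (log n')
  have hk_lower : q / 16 ≤ ⌊q / 8⌋₊ := by linarith [Nat.sub_one_lt_floor (q / 8)]
  have hk_upper : ⌊q / 8⌋₊ ≤ 1 / 8 * log n' / log (log n') :=
    (Nat.floor_le (by positivity)).trans_eq (by ring)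
  obtain ⟨m, hm, hm_admits⟩ := hadmits ⌊q / 8⌋₊ (Nat.floor_pos.2 (by linarith)) hk_upper
  have hnn' : (n : ℝ) ≤ 4 * n' := mod_cast hle_div
  have hn'4 : 4 ≤ n' := by omega
  have hq : log n / log (log n) ≤ 2 * q :=
    log_div_log_log_le_two_mul hlog (by positivity) (mod_cast by omega) (mod_cast by nlinarith)
  calc 1 / 1024 * n ^ 2 * log n / log (log n)
      = 1 / 1024 * n ^ 2 * (log n / log (log n)) := by ring
    _ ≤ 1 / 1024 * n ^ 2 * (2 * q) := by gcongr
    _ ≤ 1 / 1024 * (4 * n') ^ 2 * (2 * q) := by gcongr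
    _ = (1 - 1 / 2) * (q / 16) * n' ^ 2 := by ring
    _ ≤ (1 - 1 / 2) * ⌊q / 8⌋₊ * n' ^ 2 := by gcongr
    _ ≤ tightCycleTuran 3 n := hm_admits.le_tightCycleTuran (by omega)

end LowerBound

/-- The case `r = 3`: for `k ≤ α log n / log log n` there is a tight-cycle-free
3-partite 3-uniform hypergraph on at most `3n` vertices with at least `(1-ε) k n²`
hyperedges; consequently `f₃(n) = Ω(n² log n / log log n)`. -/
theorem three_uniform_lower_bound :
    (∀ ε : ℝ, 0 < ε → ∃ α : ℝ, 0 < α ∧ ∃ N : ℕ, ∀ n : ℕ, N ≤ n → ∀ k : ℕ, 0 < k →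
      (k : ℝ) ≤ α * Real.log n / Real.log (Real.log n) →
      ∃ m : ℕ, m ≤ 3 * n ∧
        ∃ X Y Z : Finset (Fin m), Disjoint X Y ∧ Disjoint X Z ∧ Disjoint Y Z ∧
          X ∪ Y ∪ Z = Finset.univ ∧
          ∃ E : Finset (Finset (Fin m)),
            (∀ e ∈ E, ∃ x ∈ X, ∃ y ∈ Y, ∃ z ∈ Z, e = {x, y, z}) ∧
            TightCycleFree 3 (E : Set (Finset (Fin m))) ∧
            (1 - ε) * (k : ℝ) * (n : ℝ) ^ 2 ≤ (E.card : ℝ)) ∧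
    (∃ c : ℝ, 0 < c ∧ ∃ N : ℕ, ∀ n : ℕ, N ≤ n →
      c * (n : ℝ) ^ 2 * Real.log n / Real.log (Real.log n) ≤
        (tightCycleTuran 3 n : ℝ)) := by
  refine ⟨fun ε hε ↦ ⟨1 / 8, by norm_num, ?_⟩, 1 / 1024, by norm_num, ?_⟩
  · exact eventually_atTop.1 (eventually_exists_admitsTripartiteTightCycleFree hε)
  · exact eventually_atTop.1 eventually_le_tightCycleTuran_three
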